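/- arXiv:2003.00716 — 6 statements merged into one kernel-verified Lean document; each statement's English description precedes it below -/
import Mathlib

section
/- Conservation of the Hamiltonian on the sphere: Let N ∈ ℕ, let Γ : Fin N → ℝ, and let r : ℝ → Fin N → ℝ³ be differentiable curves solving the point-vortex equations on the sphere, with ‖rᵢ(0)‖ = 1 for all i and rᵢ(t)·rⱼ(t) ≠ 1 for all i ≠ j and all t. Then the Hamiltonian H(t) = −(1/(4π)) Σ_{i≠j} Γᵢ Γⱼ log(1 − rᵢ(t)·rⱼ(t)) is constant in t. -/
/-!
Write `Vᵢ = ∑_{j≠i} Γⱼ / (1 - rᵢ·rⱼ) rⱼ`. By linearity of the cross product the equations of motion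
read `rᵢ' = (1/2π) rᵢ × Vᵢ`, so `rᵢ'·Vᵢ = 0` (`sum_dot3_sphereRHS`). Up to a constant factor, the
time derivative of the Hamiltonian is `∑_{i≠j} Γᵢ Γⱼ (rᵢ'·rⱼ + rᵢ·rⱼ') / (1 - rᵢ·rⱼ)`. The first half
is `∑ᵢ Γᵢ rᵢ'·Vᵢ = 0`, and the second half equals the first after exchanging `i` and `j`. Hence the
derivative vanishes everywhere and the Hamiltonian is constant.
-/

open scoped BigOperators

noncomputable def dot3 (a b : Fin 3 → ℝ) : ℝ := ∑ i, a i * b i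

noncomputable def sphereRHS (N : ℕ) (Γ : Fin N → ℝ) (r : Fin N → Fin 3 → ℝ) (i : Fin N) :
    Fin 3 → ℝ :=
  (1 / (2 * Real.pi)) •
    ∑ j ∈ Finset.univ.filter (fun j => j ≠ i),
      (Γ j / (1 - dot3 (r i) (r j))) • crossProduct (r i) (r j)

def IsPVSolutionSphere (N : ℕ) (Γ : Fin N → ℝ) (r : ℝ → Fin N → Fin 3 → ℝ) : Prop :=
  (∀ t : ℝ, ∀ i j : Fin N, i ≠ j → dot3 (r t i) (r t j) ≠ 1) ∧
  (∀ (t : ℝ) (i : Fin N), HasDerivAt (fun s => r s i) (sphereRHS N Γ (r t) i) t)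

noncomputable def sphereHamiltonian (N : ℕ) (Γ : Fin N → ℝ) (r : Fin N → Fin 3 → ℝ) : ℝ :=
  -(1 / (4 * Real.pi)) *
    ∑ i, ∑ j ∈ Finset.univ.filter (fun j => j ≠ i),
      Γ i * Γ j * Real.log (1 - dot3 (r i) (r j))

lemma dot3_comm (a b : Fin 3 → ℝ) : dot3 a b = dot3 b a := dotProduct_comm a b

lemma hasDerivAt_dot3 {a b : ℝ → Fin 3 → ℝ} {a' b' : Fin 3 → ℝ} {t : ℝ}
    (ha : HasDerivAt a a' t) (hb : HasDerivAt b b' t) :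
    HasDerivAt (fun s => dot3 (a s) (b s)) (dot3 a' (b t) + dot3 (a t) b') t := by
  rw [hasDerivAt_pi] at ha hb
  unfold dot3
  rw [← Finset.sum_add_distrib]
  exact HasDerivAt.fun_sum fun k _ => (ha k).mul (hb k)

/-- The velocity of a vortex is orthogonal to `Vᵢ = ∑_{j≠i} Γⱼ / (1 - rᵢ·rⱼ) rⱼ`, because it is a
multiple of `rᵢ × Vᵢ`. -/
lemma sum_dot3_sphereRHS (N : ℕ) (Γ : Fin N → ℝ) (r : Fin N → Fin 3 → ℝ) (i : Fin N) :
    ∑ j ∈ Finset.univ.filter (fun j => j ≠ i),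
      Γ j / (1 - dot3 (r i) (r j)) * dot3 (sphereRHS N Γ r i) (r j) = 0 := by
  set V : Fin 3 → ℝ := ∑ j ∈ Finset.univ.filter (fun j => j ≠ i),
    (Γ j / (1 - dot3 (r i) (r j))) • r j with hV
  have hvel : sphereRHS N Γ r i = (1 / (2 * Real.pi)) • crossProduct (r i) V := by
    simp only [sphereRHS, hV, map_sum, map_smul]
  have hsum : ∑ j ∈ Finset.univ.filter (fun j => j ≠ i),
      Γ j / (1 - dot3 (r i) (r j)) * dot3 (sphereRHS N Γ r i) (r j)
        = sphereRHS N Γ r i ⬝ᵥ V := by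
    simp only [hV, dotProduct_sum, dotProduct_smul, smul_eq_mul]
    rfl
  rw [hsum, hvel, smul_dotProduct, dotProduct_comm, dot_cross_self, smul_zero]

/-- The time derivative of the Hamiltonian's double sum vanishes. -/
lemma sum_deriv_eq_zero (N : ℕ) (Γ : Fin N → ℝ) (r : Fin N → Fin 3 → ℝ) :
    ∑ i, ∑ j ∈ Finset.univ.filter (fun j => j ≠ i),
      Γ i * Γ j * (-(dot3 (sphereRHS N Γ r i) (r j) + dot3 (r i) (sphereRHS N Γ r j))
        / (1 - dot3 (r i) (r j))) = 0 := by
  have hfirst : ∑ i, ∑ j ∈ Finset.univ.filter (fun j => j ≠ i),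
      Γ i * (Γ j / (1 - dot3 (r i) (r j)) * dot3 (sphereRHS N Γ r i) (r j)) = 0 := by
    simp only [← Finset.mul_sum, sum_dot3_sphereRHS, mul_zero, Finset.sum_const_zero]
  have hsecond : ∑ i, ∑ j ∈ Finset.univ.filter (fun j => j ≠ i),
      Γ j * (Γ i / (1 - dot3 (r j) (r i)) * dot3 (sphereRHS N Γ r j) (r i)) = 0 := by
    rw [← hfirst]
    simp only [Finset.sum_filter]
    rw [Finset.sum_comm]
    simp only [ne_comm]
  rw [← neg_zero, ← add_zero (0 : ℝ)]
  nth_rewrite 1 [← hfirst]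
  rw [← hsecond, ← Finset.sum_add_distrib, ← Finset.sum_neg_distrib]
  refine Finset.sum_congr rfl fun i _ => ?_
  rw [← Finset.sum_add_distrib, ← Finset.sum_neg_distrib]
  refine Finset.sum_congr rfl fun j _ => ?_
  rw [dot3_comm (r j) (r i), dot3_comm (r i) (sphereRHS N Γ r j)]
  ring

theorem sphere_hamiltonian_conserved (N : ℕ) (Γ : Fin N → ℝ) (r : ℝ → Fin N → Fin 3 → ℝ)
    (hsol : IsPVSolutionSphere N Γ r)
    (hunit : ∀ i : Fin N, dot3 (r 0 i) (r 0 i) = 1) :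
    ∀ t : ℝ, sphereHamiltonian N Γ (r t) = sphereHamiltonian N Γ (r 0) := by
  obtain ⟨hne, hode⟩ := hsol
  have hderiv : ∀ t, HasDerivAt (fun s => sphereHamiltonian N Γ (r s)) 0 t := by
    intro t
    have hsum : HasDerivAt (fun s => ∑ i, ∑ j ∈ Finset.univ.filter (fun j => j ≠ i),
        Γ i * Γ j * Real.log (1 - dot3 (r s i) (r s j))) 0 t := by
      rw [← sum_deriv_eq_zero N Γ (r t)]
      refine HasDerivAt.fun_sum fun i _ => HasDerivAt.fun_sum fun j hj => ?_
      have hij : j ≠ i := (Finset.mem_filter.mp hj).2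
      exact (((hasDerivAt_dot3 (hode t i) (hode t j)).const_sub 1).log
        (sub_ne_zero.mpr (hne t i j hij.symm).symm)).const_mul _
    simpa only [sphereHamiltonian, mul_zero] using hsum.const_mul (-(1 / (4 * Real.pi)))
  intro t
  exact is_const_of_deriv_eq_zero (fun s => (hderiv s).differentiableAt)
    (fun s => (hderiv s).deriv) t 0
end

section
/- Three point-vortices on the sphere with vanishing momentum are relative equilibria (rigid motion of the shape): Let Γ₁, Γ₂, Γ₃ ∈ ℝ \ {0} and let r₁, r₂, r₃ : ℝ → ℝ³ be differentiable curves solving the point-vortex equations on the sphere with N = 3, with ‖rᵢ(0)‖ = 1 for all i, rᵢ(t)·rⱼ(t) ≠ 1 for all i ≠ j and all t, and vanishing total linear momentum Γ₁r₁(0) + Γ₂r₂(0) + Γ₃r₃(0) = 0. Then all pairwise inner products are constant in time: rᵢ(t)·rⱼ(t) = rᵢ(0)·rⱼ(0) for all i, j and all t. -/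
/-!
Both the squared lengths `rᵢ · rᵢ` and the momentum `∑ Γᵢ rᵢ` are conserved: the velocity of `rᵢ`
is a combination of vectors `rᵢ × rⱼ`, hence orthogonal to `rᵢ`, and the terms of `∑ Γᵢ ṙᵢ` cancel
in pairs because `rᵢ × rⱼ` is antisymmetric. So at every time the three vectors are unit vectors with
`Γ₁ r₁ + Γ₂ r₂ + Γ₃ r₃ = 0`, and such a triangle relation determines the inner products from the
strengths alone: `2 Γ₁ Γ₂ (r₁ · r₂) = Γ₃² - Γ₁² - Γ₂²`, and cyclically.
-/

open scoped BigOperators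

lemma dot3_sphereRHS (N : ℕ) (Γ : Fin N → ℝ) (r : Fin N → Fin 3 → ℝ) (i : Fin N) :
    dot3 (r i) (sphereRHS N Γ r i) = 0 := by
  change dotProduct (r i) (sphereRHS N Γ r i) = 0
  simp [sphereRHS, dotProduct_smul, dotProduct_sum, dot_self_cross]

lemma sum_smul_sphereRHS (N : ℕ) (Γ : Fin N → ℝ) (r : Fin N → Fin 3 → ℝ) :
    ∑ i, Γ i • sphereRHS N Γ r i = 0 := by
  -- The diagonal terms vanish, so the inner sum may run over all indices.
  have hfull : ∀ i, sphereRHS N Γ r i = (1 / (2 * Real.pi)) •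
      ∑ j, (Γ j / (1 - dot3 (r i) (r j))) • crossProduct (r i) (r j) := by
    intro i
    rw [sphereRHS, Finset.sum_filter]
    congr 1
    refine Finset.sum_congr rfl fun j _ => ?_
    split_ifs with h
    · rfl
    · rw [not_not.mp h, cross_self, smul_zero]
  have hanti : ∑ i, ∑ j, (Γ i * (Γ j / (1 - dot3 (r i) (r j)))) • crossProduct (r i) (r j) = 0 := by
    rw [← self_eq_neg]
    conv_lhs => rw [Finset.sum_comm]
    simp only [← Finset.sum_neg_distrib]
    refine Finset.sum_congr rfl fun i _ => Finset.sum_congr rfl fun j _ => ?_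
    rw [← smul_neg, cross_anticomm, dot3_comm (r j) (r i)]
    congr 1
    ring
  simp only [hfull, smul_comm _ (1 / (2 * Real.pi)), ← Finset.smul_sum]
  simp only [Finset.smul_sum (s := Finset.univ) (r := Γ _), smul_smul (Γ _)]
  rw [hanti, smul_zero]

lemma IsPVSolutionSphere.dot3_self_eq {N : ℕ} {Γ : Fin N → ℝ} {r : ℝ → Fin N → Fin 3 → ℝ}
    (h : IsPVSolutionSphere N Γ r) (t : ℝ) (i : Fin N) :
    dot3 (r t i) (r t i) = dot3 (r 0 i) (r 0 i) := by
  have hd : ∀ s, HasDerivAt (fun s => dot3 (r s i) (r s i)) 0 s := by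
    intro s
    have hc := fun k => hasDerivAt_pi.mp (h.2 s i) k
    have h1 := HasDerivAt.fun_sum (u := Finset.univ) fun k _ => (hc k).mul (hc k)
    refine h1.congr_deriv ?_
    have h0 := dot3_sphereRHS N Γ (r s) i
    simp only [dot3, Fin.sum_univ_three] at h0 ⊢
    linarith
  exact is_const_of_deriv_eq_zero (fun s => (hd s).differentiableAt) (fun s => (hd s).deriv) t 0

lemma IsPVSolutionSphere.momentum_eq {N : ℕ} {Γ : Fin N → ℝ} {r : ℝ → Fin N → Fin 3 → ℝ}
    (h : IsPVSolutionSphere N Γ r) (t : ℝ) :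
    ∑ i, Γ i • r t i = ∑ i, Γ i • r 0 i := by
  have hd : ∀ s, HasDerivAt (fun s => ∑ i, Γ i • r s i) 0 s := by
    intro s
    have h1 := HasDerivAt.fun_sum (u := Finset.univ) fun i _ => (h.2 s i).const_smul (Γ i)
    exact h1.congr_deriv (sum_smul_sphereRHS N Γ (r s))
  exact is_const_of_deriv_eq_zero (fun s => (hd s).differentiableAt) (fun s => (hd s).deriv) t 0

/-- The law of cosines: unit vectors satisfying `x a + y b + z c = 0` have `a · b` determined by the
coefficients. -/
lemma two_mul_dot3_of_momentum_zero {x y z : ℝ} {a b c : Fin 3 → ℝ}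
    (ha : dot3 a a = 1) (hb : dot3 b b = 1) (hc : dot3 c c = 1)
    (h : x • a + y • b + z • c = 0) :
    2 * x * y * dot3 a b = z ^ 2 - x ^ 2 - y ^ 2 := by
  have hk : ∀ k, x * a k + y * b k = -(z * c k) := by
    intro k
    have := congrFun h k
    simp only [Pi.add_apply, Pi.smul_apply, smul_eq_mul, Pi.zero_apply] at this
    linarith
  have hsq : ∀ k, (x * a k + y * b k) ^ 2 = (z * c k) ^ 2 := by
    intro k
    rw [hk, neg_sq]
  simp only [dot3, Fin.sum_univ_three] at *
  linear_combination hsq 0 + hsq 1 + hsq 2 - x ^ 2 * ha - y ^ 2 * hb + z ^ 2 * hc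

theorem sphere_three_vortices_zero_momentum_relative_equilibrium
    (Γ : Fin 3 → ℝ) (hΓ : ∀ i, Γ i ≠ 0)
    (r : ℝ → Fin 3 → Fin 3 → ℝ) (hsol : IsPVSolutionSphere 3 Γ r)
    (hunit : ∀ i : Fin 3, dot3 (r 0 i) (r 0 i) = 1)
    (hmom : ∑ i, Γ i • r 0 i = 0) :
    ∀ (t : ℝ) (i j : Fin 3), dot3 (r t i) (r t j) = dot3 (r 0 i) (r 0 j) := by
  intro t
  have hu : ∀ s i, dot3 (r s i) (r s i) = 1 := fun s i => (hsol.dot3_self_eq s i).trans (hunit i)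
  have hm : ∀ s, Γ 0 • r s 0 + Γ 1 • r s 1 + Γ 2 • r s 2 = 0 := by
    intro s
    rw [← Fin.sum_univ_three (fun i => Γ i • r s i), hsol.momentum_eq s, hmom]
  have key : ∀ i j k : Fin 3, (∀ s, Γ i • r s i + Γ j • r s j + Γ k • r s k = 0) →
      dot3 (r t i) (r t j) = dot3 (r 0 i) (r 0 j) := by
    intro i j k h
    have hne : 2 * Γ i * Γ j ≠ 0 := mul_ne_zero (mul_ne_zero two_ne_zero (hΓ i)) (hΓ j)
    refine mul_left_cancel₀ hne ?_
    rw [two_mul_dot3_of_momentum_zero (hu t i) (hu t j) (hu t k) (h t),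
      two_mul_dot3_of_momentum_zero (hu 0 i) (hu 0 j) (hu 0 k) (h 0)]
  have h01 := key 0 1 2 hm
  have h12 := key 1 2 0 fun s => by rw [← hm s]; abel
  have h02 := key 0 2 1 fun s => by rw [← hm s]; abel
  intro i j
  fin_cases i <;> fin_cases j
  · exact hsol.dot3_self_eq t 0
  · exact h01
  · exact h02
  · exact (dot3_comm _ _).trans (h01.trans (dot3_comm _ _))
  · exact hsol.dot3_self_eq t 1
  · exact h12
  · exact (dot3_comm _ _).trans (h02.trans (dot3_comm _ _))
  · exact (dot3_comm _ _).trans (h12.trans (dot3_comm _ _))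
  · exact hsol.dot3_self_eq t 2
end

section
/- Spectral structure of the infinitesimal generator of K (Lemma 5.2): Let N ∈ ℕ and Γ : Fin N → ℝ, and let ξ_Γ : (ℝ²)^N → (ℝ²)^N be the linear map (ξ_Γ r)ᵢ = (Σⱼ Γⱼ rⱼ)^⊥ where (x, y)^⊥ = (y, −x). Then (a) ξ_Γ³ = −(Σᵢ Γᵢ)² ξ_Γ, so every nonzero eigenvalue of ξ_Γ (over ℂ) equals ±i Σᵢ Γᵢ; and (b) if some Γᵢ ≠ 0, the rank of ξ_Γ equals 2. In particular, if Σᵢ Γᵢ ≠ 0 the group generated by ξ_Γ is compact and hence acts properly. -/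
/-!
The generator factors as `ξ_Γ = Δ ∘ ⊥ ∘ m`, where `m r = Σⱼ Γⱼ rⱼ` is the weighted sum and `Δ` is
the diagonal embedding `ℝ² → (ℝ²)^N`. Since `m ∘ Δ` is multiplication by `S = Σⱼ Γⱼ` and `⊥² = -1`,
the cubic identity follows. For an eigenvector `v`, taking the weighted sum of the eigenvalue
equation gives `S w^⊥ = μ w` with `w = m v`; hence `μ² = -S²` unless `w = 0`, in which case `μ = 0`.
If some `Γᵢ ≠ 0`, then `m` is surjective, `⊥` is bijective and `Δ` is injective, so the rank is
`dim ℝ² = 2`.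
-/

open scoped BigOperators

/-- Clockwise rotation by π/2: (x, y)^⊥ = (y, -x), as a linear map on ℝ². -/
noncomputable def perpL : ℝ × ℝ →ₗ[ℝ] ℝ × ℝ :=
  LinearMap.prod (LinearMap.snd ℝ ℝ ℝ) (-(LinearMap.fst ℝ ℝ ℝ))

/-- The infinitesimal generator ξ_Γ of the one-parameter group K acting on (ℝ²)^N:
    (ξ_Γ r)ᵢ = (Σⱼ Γⱼ rⱼ)^⊥ for every i. -/
noncomputable def xiGamma (N : ℕ) (Γ : Fin N → ℝ) :
    (Fin N → ℝ × ℝ) →ₗ[ℝ] (Fin N → ℝ × ℝ) :=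
  LinearMap.pi fun _ => perpL ∘ₗ (∑ j, Γ j • LinearMap.proj j)

lemma xiGamma_apply (N : ℕ) (Γ : Fin N → ℝ) (r : Fin N → ℝ × ℝ) (i : Fin N) :
    xiGamma N Γ r i = ((∑ j, Γ j • r j).2, -(∑ j, Γ j • r j).1) := by
  simp only [xiGamma, perpL, LinearMap.pi_apply, LinearMap.comp_apply, LinearMap.sum_apply,
    LinearMap.smul_apply, LinearMap.proj_apply]
  rfl

/-- The range of `ξ_Γ` is the diagonal as soon as some weight is nonzero. -/
lemma range_xiGamma (N : ℕ) (Γ : Fin N → ℝ) (i : Fin N) (hi : Γ i ≠ 0) :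
    LinearMap.range (xiGamma N Γ) =
      LinearMap.range (LinearMap.pi fun _ : Fin N => (LinearMap.id : ℝ × ℝ →ₗ[ℝ] ℝ × ℝ)) := by
  apply le_antisymm
  · rintro _ ⟨r, rfl⟩
    refine ⟨((∑ j, Γ j • r j).2, -(∑ j, Γ j • r j).1), ?_⟩
    funext k
    rw [xiGamma_apply]
    rfl
  · rintro _ ⟨c, rfl⟩
    -- The vector supported at `i` whose weighted sum is `(-c.2, c.1)`, the preimage of `c` under `⊥`.
    refine ⟨Pi.single i ((Γ i)⁻¹ • (-c.2, c.1)), ?_⟩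
    have hsum : ∑ j, Γ j • (Pi.single i ((Γ i)⁻¹ • (-c.2, c.1)) : Fin N → ℝ × ℝ) j
        = (-c.2, c.1) := by
      rw [Finset.sum_eq_single i]
      · rw [Pi.single_eq_same, smul_inv_smul₀ hi]
      · intro j _ hj
        rw [Pi.single_eq_of_ne hj, smul_zero]
      · simp
    funext k
    rw [xiGamma_apply, hsum]
    simp

theorem xiGamma_cubic_eigenvalues_rank (N : ℕ) (Γ : Fin N → ℝ) :
    (∀ r : Fin N → ℝ × ℝ,
      xiGamma N Γ (xiGamma N Γ (xiGamma N Γ r)) = (-(∑ i, Γ i) ^ 2) • xiGamma N Γ r) ∧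
    (∀ (μ : ℂ) (v : Fin N → ℂ × ℂ), v ≠ 0 →
      (fun i : Fin N => ((∑ j, (Γ j : ℂ) • v j).2, -(∑ j, (Γ j : ℂ) • v j).1)) = μ • v →
      μ = 0 ∨ μ = Complex.I * (∑ i, (Γ i : ℂ)) ∨ μ = -(Complex.I * ∑ i, (Γ i : ℂ))) ∧
    ((∃ i, Γ i ≠ 0) → Module.finrank ℝ ↥(LinearMap.range (xiGamma N Γ)) = 2) := by
  refine ⟨?_, ?_, ?_⟩
  · intro r
    funext _
    simp only [xiGamma_apply, Pi.smul_apply, ← Finset.sum_smul]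
    ext <;> simp <;> ring
  · intro μ v hv h
    generalize hw : ∑ j, (Γ j : ℂ) • v j = w at h
    have hj : ∀ j, (w.2, -w.1) = μ • v j := fun j => congrFun h j
    have hS : (∑ j, (Γ j : ℂ)) • (w.2, -w.1) = μ • w := by
      rw [Finset.sum_smul, ← hw, Finset.smul_sum, hw]
      exact Finset.sum_congr rfl fun j _ => by rw [hj j, smul_comm]
    generalize ∑ j, (Γ j : ℂ) = S at hS
    have h1 : S * w.2 = μ * w.1 := congrArg Prod.fst hS
    have h2 : S * -w.1 = μ * w.2 := congrArg Prod.snd hS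
    have hsq : ∀ z : ℂ, z ≠ 0 → (μ ^ 2 + S ^ 2) * z = 0 →
        μ = Complex.I * S ∨ μ = -(Complex.I * S) := by
      intro z hz hz0
      have h0 : μ ^ 2 + S ^ 2 = 0 := (mul_eq_zero.mp hz0).resolve_right hz
      apply sq_eq_sq_iff_eq_or_eq_neg.mp
      rw [mul_pow, Complex.I_sq]
      linear_combination h0
    by_cases hw1 : w.1 = 0
    · by_cases hw2 : w.2 = 0
      · left
        by_contra hμ
        apply hv
        funext j
        have h0 := hj j
        rw [hw1, hw2, neg_zero] at h0
        exact (smul_eq_zero.mp h0.symm).resolve_left hμ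
      · exact Or.inr (hsq _ hw2 (by linear_combination S * h1 - μ * h2))
    · exact Or.inr (hsq _ hw1 (by linear_combination -μ * h1 - S * h2))
  · rintro ⟨i, hi⟩
    rw [range_xiGamma N Γ i hi, LinearMap.finrank_range_of_inj]
    · simp
    · intro a b hab
      exact congrFun hab i
end

section
/- Three point-vortices in the plane with vanishing circulation and momentum are relative equilibria (rigid motion of the shape): Let Γ₁, Γ₂, Γ₃ ∈ ℝ \ {0} with Γ₁ + Γ₂ + Γ₃ = 0, and let r₁, r₂, r₃ : ℝ → ℝ² be differentiable curves solving the point-vortex equations on the plane with N = 3, with rᵢ(t) ≠ rⱼ(t) for all i ≠ j and all t, and with vanishing total linear momentum Γ₁ r₁(0) + Γ₂ r₂(0) + Γ₃ r₃(0) = 0. Then all pairwise distances are constant in time: ‖rᵢ(t) − rⱼ(t)‖ = ‖rᵢ(0) − rⱼ(0)‖ for all i, j and all t. -/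
/-!
The linear momentum `∑ Γᵢ rᵢ` is conserved, because the pairwise interactions are antisymmetric.
Hence it vanishes at all times, and together with `∑ Γᵢ = 0` this gives
`Γ₁ (r₁ - r₀) + Γ₂ (r₂ - r₀) = 0`, so the three vortices are collinear at all times
(`collinear_of_momentum_eq_zero`). The velocity that one vortex induces on another is orthogonal to
the line joining them, so for a collinear configuration every velocity is orthogonal to the common
line (`inner_planeRHS_eq_zero`). The derivative of `‖rᵢ - rⱼ‖²`, which is
`2 ⟨rᵢ - rⱼ, ṙᵢ - ṙⱼ⟩`, is therefore zero.
-/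

open scoped BigOperators

noncomputable def sq2 (v : ℝ × ℝ) : ℝ := v.1 ^ 2 + v.2 ^ 2

noncomputable def planeRHS (N : ℕ) (Γ : Fin N → ℝ) (r : Fin N → ℝ × ℝ) (i : Fin N) : ℝ × ℝ :=
  (-(1 / (2 * Real.pi)) * ∑ j ∈ Finset.univ.filter (fun j => j ≠ i),
      Γ j * ((r i).2 - (r j).2) / sq2 (r i - r j),
    (1 / (2 * Real.pi)) * ∑ j ∈ Finset.univ.filter (fun j => j ≠ i),
      Γ j * ((r i).1 - (r j).1) / sq2 (r i - r j))

def IsPVSolutionPlane (N : ℕ) (Γ : Fin N → ℝ) (r : ℝ → Fin N → ℝ × ℝ) : Prop :=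
  (∀ t : ℝ, ∀ i j : Fin N, i ≠ j → r t i ≠ r t j) ∧
  (∀ (t : ℝ) (i : Fin N), HasDerivAt (fun s => r s i) (planeRHS N Γ (r t) i) t)

lemma sq2_sub_comm (u v : ℝ × ℝ) : sq2 (u - v) = sq2 (v - u) := by
  simp only [sq2, Prod.fst_sub, Prod.snd_sub]
  ring

/-- Infinitesimal conservation of linear momentum. -/
lemma momentum_planeRHS_eq_zero (Γ : Fin 3 → ℝ) (r : Fin 3 → ℝ × ℝ) :
    ∑ i, Γ i • planeRHS 3 Γ r i = 0 := by
  ext <;>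
  · simp [Fin.sum_univ_three, planeRHS, Finset.sum_filter, sq2_sub_comm (r 1) (r 0),
      sq2_sub_comm (r 2) (r 0), sq2_sub_comm (r 2) (r 1)]
    ring

lemma momentum_eq_zero (Γ : Fin 3 → ℝ) (r : ℝ → Fin 3 → ℝ × ℝ)
    (hsol : IsPVSolutionPlane 3 Γ r) (hmom : ∑ i, Γ i • r 0 i = 0) (t : ℝ) :
    ∑ i, Γ i • r t i = 0 := by
  have hd : ∀ t, HasDerivAt (fun s => ∑ i, Γ i • r s i) 0 t := fun t => by
    rw [← momentum_planeRHS_eq_zero Γ (r t)]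
    exact HasDerivAt.fun_sum fun i _ => (hsol.2 t i).const_smul (Γ i)
  rw [← hmom]
  exact is_const_of_deriv_eq_zero (fun t => (hd t).differentiableAt) (fun t => (hd t).deriv) t 0

/-- Vanishing circulation and momentum force three vortices onto a common line. -/
lemma collinear_of_momentum_eq_zero (Γ : Fin 3 → ℝ) (hΓ : ∀ i, Γ i ≠ 0) (hcirc : ∑ i, Γ i = 0)
    (r : Fin 3 → ℝ × ℝ) (hmom : ∑ i, Γ i • r i = 0) :
    ∃ (a : Fin 3 → ℝ) (w : ℝ × ℝ), ∀ i, r i = r 0 + a i • w := by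
  have h2 := hΓ 2
  rw [Fin.sum_univ_three] at hcirc hmom
  have hx := congrArg Prod.fst hmom
  have hy := congrArg Prod.snd hmom
  simp only [Prod.fst_add, Prod.snd_add, Prod.smul_fst, Prod.smul_snd, smul_eq_mul, Prod.fst_zero,
    Prod.snd_zero] at hx hy
  -- `r₂ - r₀ = -(Γ₁ / Γ₂) (r₁ - r₀)`
  refine ⟨![0, 1, -Γ 1 / Γ 2], r 1 - r 0, fun i => ?_⟩
  fin_cases i
  · simp
  · simp
  · ext
    · simp
      field_simp
      linear_combination hx - (r 0).1 * hcirc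
    · simp
      field_simp
      linear_combination hy - (r 0).2 * hcirc

/-- In a collinear configuration each velocity is orthogonal to the line of the vortices. -/
lemma inner_planeRHS_eq_zero (N : ℕ) (Γ : Fin N → ℝ) (r : Fin N → ℝ × ℝ) (p : ℝ × ℝ)
    (a : Fin N → ℝ) (w : ℝ × ℝ) (hr : ∀ i, r i = p + a i • w) (i : Fin N) :
    w.1 * (planeRHS N Γ r i).1 + w.2 * (planeRHS N Γ r i).2 = 0 := by
  have key : w.1 * ∑ j ∈ Finset.univ.filter (fun j => j ≠ i),
        Γ j * ((r i).2 - (r j).2) / sq2 (r i - r j)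
      = w.2 * ∑ j ∈ Finset.univ.filter (fun j => j ≠ i),
        Γ j * ((r i).1 - (r j).1) / sq2 (r i - r j) := by
    rw [Finset.mul_sum, Finset.mul_sum]
    refine Finset.sum_congr rfl fun j _ => ?_
    -- the denominator is kept opaque so that only the numerators are expanded
    generalize sq2 (r i - r j) = d
    rw [hr i, hr j]
    simp only [Prod.fst_add, Prod.snd_add, Prod.smul_fst, Prod.smul_snd, smul_eq_mul]
    ring
  simp only [planeRHS]
  linear_combination (-(1 / (2 * Real.pi))) * key

theorem plane_three_vortices_zero_circulation_momentum_relative_equilibrium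
    (Γ : Fin 3 → ℝ) (hΓ : ∀ i, Γ i ≠ 0) (hcirc : ∑ i, Γ i = 0)
    (r : ℝ → Fin 3 → ℝ × ℝ) (hsol : IsPVSolutionPlane 3 Γ r)
    (hmom : ∑ i, Γ i • r 0 i = 0) :
    ∀ (t : ℝ) (i j : Fin 3), sq2 (r t i - r t j) = sq2 (r 0 i - r 0 j) := by
  intro t i j
  have hd : ∀ t, HasDerivAt (fun s => sq2 (r s i - r s j)) 0 t := fun t => by
    obtain ⟨a, w, hr⟩ := collinear_of_momentum_eq_zero Γ hΓ hcirc (r t)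
      (momentum_eq_zero Γ r hsol hmom t)
    have hi := inner_planeRHS_eq_zero 3 Γ (r t) _ a w hr i
    have hj := inner_planeRHS_eq_zero 3 Γ (r t) _ a w hr j
    have hv := (hsol.2 t i).sub (hsol.2 t j)
    have h1 := ((hasFDerivAt_fst (𝕜 := ℝ)).comp_hasDerivAt t hv).pow 2
    have h2 := ((hasFDerivAt_snd (𝕜 := ℝ)).comp_hasDerivAt t hv).pow 2
    have hfst : (r t i).1 - (r t j).1 = (a i - a j) * w.1 := by
      rw [hr i, hr j]
      simp only [Prod.fst_add, Prod.smul_fst, smul_eq_mul]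
      ring
    have hsnd : (r t i).2 - (r t j).2 = (a i - a j) * w.2 := by
      rw [hr i, hr j]
      simp only [Prod.snd_add, Prod.smul_snd, smul_eq_mul]
      ring
    refine (h1.add h2).congr_deriv ?_
    simp [hfst, hsnd]
    linear_combination 2 * (a i - a j) * (hi - hj)
  exact is_const_of_deriv_eq_zero (fun t => (hd t).differentiableAt) (fun t => (hd t).deriv) t 0
end

section
/- Conservation laws on the hyperbolic plane: Let N ∈ ℕ, let Γ : Fin N → ℝ, and let r : ℝ → Fin N → ℝ³ be differentiable curves solving the point-vortex equations on the hyperbolic plane (with (rᵢ(t)·_L rⱼ(t))² ≠ 1 for all i ≠ j and all t). Then (a) the total linear momentum Σᵢ Γᵢ rᵢ(t) ∈ ℝ³ is constant in t, and (b) for each i the quantity rᵢ(t)·_L rᵢ(t) is constant in t; in particular if each rᵢ(0) lies on the hyperboloid rᵢ·_L rᵢ = 1, the solution remains on it for all t. -/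
/-!
Both conservation laws come from antisymmetry of the Lorentzian cross product.

For the momentum, `∑ i, Γ i • ṙ i` is, up to a factor, the double sum over `i, j` of
`Γ i Γ j / ((r i ·_L r j)² - 1) • (r i ×_L r j)`. The coefficient is symmetric in `i, j` and the
cross product antisymmetric, so the sum vanishes (`sum_smul_hypRHS`).

For `r i ·_L r i`, the derivative is `2 (r i ·_L ṙ i)`, and `ṙ i` is a combination of vectors
`r i ×_L r j`. Since `L² = 1`, `a ·_L (a ×_L b) = aᵀ (a × b) = 0`, so the derivative vanishes
(`dotL_hypRHS`).
-/

open scoped BigOperators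

/-- The Lorentzian pairing a ·_L b = -a₁b₁ - a₂b₂ + a₃b₃ on ℝ³, for L = diag(-1,-1,1). -/
noncomputable def dotL (a b : Fin 3 → ℝ) : ℝ := -(a 0 * b 0) - a 1 * b 1 + a 2 * b 2

/-- The Lorentzian cross product a ×_L b = L (a × b), for L = diag(-1,-1,1). -/
noncomputable def crossL (a b : Fin 3 → ℝ) : Fin 3 → ℝ :=
  ![-(crossProduct a b 0), -(crossProduct a b 1), crossProduct a b 2]

noncomputable def hypRHS (N : ℕ) (Γ : Fin N → ℝ) (r : Fin N → Fin 3 → ℝ) (i : Fin N) :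
    Fin 3 → ℝ :=
  (-(1 / Real.pi)) •
    ∑ j ∈ Finset.univ.filter (fun j => j ≠ i),
      (Γ j / ((dotL (r i) (r j)) ^ 2 - 1)) • crossL (r i) (r j)

def IsPVSolutionHyp (N : ℕ) (Γ : Fin N → ℝ) (r : ℝ → Fin N → Fin 3 → ℝ) : Prop :=
  (∀ t : ℝ, ∀ i j : Fin N, i ≠ j → (dotL (r t i) (r t j)) ^ 2 ≠ 1) ∧
  (∀ (t : ℝ) (i : Fin N), HasDerivAt (fun s => r s i) (hypRHS N Γ (r t) i) t)

theorem crossL_swap (a b : Fin 3 → ℝ) : crossL a b = -crossL b a := by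
  ext k
  fin_cases k <;> simp [crossL, cross_apply] <;> ring

theorem dotL_comm (a b : Fin 3 → ℝ) : dotL a b = dotL b a := by
  unfold dotL
  ring

theorem dotL_crossL_self (a b : Fin 3 → ℝ) : dotL a (crossL a b) = 0 := by
  simp [dotL, crossL, cross_apply]
  ring

theorem dotL_smul (a b : Fin 3 → ℝ) (c : ℝ) : dotL a (c • b) = c * dotL a b := by
  simp [dotL]
  ring

theorem dotL_sum {ι : Type*} (s : Finset ι) (a : Fin 3 → ℝ) (f : ι → Fin 3 → ℝ) :
    dotL a (∑ j ∈ s, f j) = ∑ j ∈ s, dotL a (f j) := by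
  simp [dotL, Finset.sum_apply, Finset.mul_sum, Finset.sum_add_distrib,
    Finset.sum_sub_distrib]

/-- The velocity of each vortex is Lorentz-orthogonal to its position. -/
theorem dotL_hypRHS (N : ℕ) (Γ : Fin N → ℝ) (r : Fin N → Fin 3 → ℝ) (i : Fin N) :
    dotL (r i) (hypRHS N Γ r i) = 0 := by
  simp only [hypRHS, dotL_smul, dotL_sum, dotL_crossL_self, mul_zero, Finset.sum_const_zero]

/-- The restriction `j ≠ i` can be dropped, because `r i ×_L r i = 0`. -/
theorem hypRHS_eq_sum_univ (N : ℕ) (Γ : Fin N → ℝ) (r : Fin N → Fin 3 → ℝ) (i : Fin N) :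
    hypRHS N Γ r i = (-(1 / Real.pi)) •
      ∑ j, (Γ j / ((dotL (r i) (r j)) ^ 2 - 1)) • crossL (r i) (r j) := by
  unfold hypRHS
  congr 1
  refine Finset.sum_subset (Finset.filter_subset _ _) fun j _ hj => ?_
  obtain rfl : j = i := by simpa using hj
  rw [self_eq_neg.mp (crossL_swap (r j) (r j)), smul_zero]

/-- The total momentum has zero derivative: the pairwise interactions cancel. -/
theorem sum_smul_hypRHS (N : ℕ) (Γ : Fin N → ℝ) (r : Fin N → Fin 3 → ℝ) :
    ∑ i, Γ i • hypRHS N Γ r i = 0 := by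
  have hpair : ∑ i, ∑ j, (Γ i * (Γ j / ((dotL (r i) (r j)) ^ 2 - 1))) • crossL (r i) (r j) = 0 := by
    -- Exchanging the summation indices turns the double sum into its negative.
    rw [← self_eq_neg]
    conv_lhs => rw [Finset.sum_comm]
    simp_rw [← Finset.sum_neg_distrib]
    refine Finset.sum_congr rfl fun i _ => Finset.sum_congr rfl fun j _ => ?_
    rw [crossL_swap (r j) (r i), dotL_comm (r j) (r i), smul_neg]
    congr 2
    ring
  calc ∑ i, Γ i • hypRHS N Γ r i
      = (-(1 / Real.pi)) •
        ∑ i, ∑ j, (Γ i * (Γ j / ((dotL (r i) (r j)) ^ 2 - 1))) • crossL (r i) (r j) := by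
        rw [Finset.smul_sum]
        refine Finset.sum_congr rfl fun i _ => ?_
        rw [hypRHS_eq_sum_univ, smul_comm, Finset.smul_sum]
        simp_rw [smul_smul]
    _ = 0 := by rw [hpair, smul_zero]

theorem hasDerivAt_dotL_self {u : ℝ → Fin 3 → ℝ} {v : Fin 3 → ℝ} {t : ℝ}
    (hu : HasDerivAt u v t) :
    HasDerivAt (fun s => dotL (u s) (u s)) (2 * dotL (u t) v) t := by
  have hk := hasDerivAt_pi.mp hu
  refine ((((hk 0).mul (hk 0)).neg.sub ((hk 1).mul (hk 1))).add
    ((hk 2).mul (hk 2))).congr_deriv ?_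
  unfold dotL
  ring

theorem hyp_conservation_laws (N : ℕ) (Γ : Fin N → ℝ) (r : ℝ → Fin N → Fin 3 → ℝ)
    (hsol : IsPVSolutionHyp N Γ r) :
    (∀ t : ℝ, ∑ i, Γ i • r t i = ∑ i, Γ i • r 0 i) ∧
    (∀ (t : ℝ) (i : Fin N), dotL (r t i) (r t i) = dotL (r 0 i) (r 0 i)) ∧
    ((∀ i : Fin N, dotL (r 0 i) (r 0 i) = 1) →
      ∀ (t : ℝ) (i : Fin N), dotL (r t i) (r t i) = 1) := by
  obtain ⟨-, hderiv⟩ := hsol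
  have hnorm : ∀ (t : ℝ) (i : Fin N), dotL (r t i) (r t i) = dotL (r 0 i) (r 0 i) := by
    intro t i
    have h : ∀ s, HasDerivAt (fun s => dotL (r s i) (r s i)) 0 s := fun s => by
      simpa [dotL_hypRHS] using hasDerivAt_dotL_self (hderiv s i)
    exact is_const_of_deriv_eq_zero (fun s => (h s).differentiableAt) (fun s => (h s).deriv) t 0
  refine ⟨fun t => ?_, hnorm, fun h0 t i => (hnorm t i).trans (h0 i)⟩
  have h : ∀ s, HasDerivAt (fun s => ∑ i, Γ i • r s i) 0 s := fun s => by
    rw [← sum_smul_hypRHS N Γ (r s)]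
    exact HasDerivAt.fun_sum fun i _ => (hderiv s i).const_smul (Γ i)
  exact is_const_of_deriv_eq_zero (fun s => (h s).differentiableAt) (fun s => (h s).deriv) t 0
end

section
/- Two point-vortices on the hyperbolic plane cannot have vanishing momentum: Let Γ₁, Γ₂ ∈ ℝ \ {0} and let r₁, r₂ ∈ ℝ³ lie on the hyperboloid (rᵢ ·_L rᵢ = 1 with third coordinate zᵢ > 0 for i = 1, 2). If Γ₁ r₁ + Γ₂ r₂ = 0, then r₁ = r₂ (and Γ₂ = −Γ₁); in particular, the two-vortex equations on the hyperbolic plane admit no admissible configuration (r₁ ≠ r₂) with vanishing total linear momentum. -/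
/-!
Vanishing momentum means `Γ₁ r₁ = -Γ₂ r₂`. Taking Lorentzian norms of both sides gives
`Γ₁² = Γ₂²`, since both points have norm one. The case `Γ₁ = Γ₂` would make the points antipodal,
which is impossible on a single sheet of the hyperboloid; hence `Γ₂ = -Γ₁`, and so `r₁ = r₂`.
-/

open scoped BigOperators

theorem hyp_two_vortices_no_vanishing_momentum (Γ₁ Γ₂ : ℝ) (hΓ₁ : Γ₁ ≠ 0) (hΓ₂ : Γ₂ ≠ 0)
    (r₁ r₂ : Fin 3 → ℝ) (h₁ : dotL r₁ r₁ = 1) (h₂ : dotL r₂ r₂ = 1)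
    (hz₁ : r₁ 2 > 0) (hz₂ : r₂ 2 > 0)
    (hmom : Γ₁ • r₁ + Γ₂ • r₂ = 0) :
    r₁ = r₂ ∧ Γ₂ = -Γ₁ := by
  have hk : ∀ k, Γ₁ * r₁ k = -(Γ₂ * r₂ k) := fun k => by
    have h := congrFun hmom k
    simp only [Pi.add_apply, Pi.smul_apply, smul_eq_mul, Pi.zero_apply] at h
    linarith
  -- Both points have unit Lorentzian norm, so `Γ₁ r₁ = -Γ₂ r₂` forces equal squared strengths.
  have hsq : Γ₁ ^ 2 = Γ₂ ^ 2 := by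
    have hn : dotL (Γ₁ • r₁) (Γ₁ • r₁) = dotL (Γ₂ • r₂) (Γ₂ • r₂) := by
      simp only [dotL, Pi.smul_apply, smul_eq_mul, hk]
      ring
    simp only [dotL, Pi.smul_apply, smul_eq_mul] at hn h₁ h₂
    linear_combination hn - Γ₁ ^ 2 * h₁ + Γ₂ ^ 2 * h₂
  rcases sq_eq_sq_iff_eq_or_eq_neg.mp hsq with h | h
  · -- Equal strengths would give `r₁ = -r₂`, but both points lie on the upper sheet.
    have h2 := hk 2
    rw [h, ← mul_neg] at h2
    have := mul_left_cancel₀ hΓ₂ h2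
    linarith
  · refine ⟨funext fun k => mul_left_cancel₀ hΓ₁ ?_, by linarith⟩
    rw [hk k, h, neg_mul]
end
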